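/- arXiv:2603.26399 — 2 statements merged into one kernel-verified Lean document; each statement's English description precedes it below -/
import Mathlib

section
/- For every integer r ≥ 1, ζ*(2, 1, 1, …, 1) with r ones appended, interpreted via the limit ζ*(2, {1}^{r−1}, 2, {1}^∞), equals (r+1)ζ(r+2); i.e., the infinite multiple zeta-star value with index (2, {1}^{r−1}, 2, 1, 1, …) equals (r+1)ζ(r+2). -/
open scoped BigOperators

/-- The set of weakly decreasing tuples of positive integers of length `r`. -/
def DecTuple (r : ℕ) : Set (Fin r → ℕ) :=
  {f | (∀ i, 1 ≤ f i) ∧ ∀ i j : Fin r, i ≤ j → f j ≤ f i}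

/-- The multiple zeta-star value of an index `k`. -/
noncomputable def zetaStar {r : ℕ} (k : Fin r → ℕ) : ℝ :=
  ∑' f : DecTuple r, ∏ i, (((f : Fin r → ℕ) i : ℝ) ^ (k i))⁻¹

/-!
Since `ζ⋆_n({1}^t) → n` as `t → ∞`, an entry `p + 1` followed by more and more ones acts like an
entry `p` in last position; by dominated convergence, the limit to be computed is
`ζ⋆(2, {1}^r) = ∑_n n⁻² ζ⋆_n({1}^r)`.

As `∑_r ζ⋆_n({1}^r) x^r = ∏_{j ≤ n} (1 - x / j)⁻¹ = n B(n, 1 - x)`, the evaluation of this sum is a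
statement about Beta functions. The terms
`B(n + 2, m + 1 - x) / (n + 1) = B(n + 1, m + 2 - x) / (m + 1 - x)` of a double series over
`m, n ≥ 0` telescope in either direction by `B(a, b) = B(a + 1, b) + B(a, b + 1)`. Summing over
`m` first gives `∑_n B(n + 1, 1 - x) / (n + 1)`, whose `x^r`-coefficient is `ζ⋆(2, {1}^r)`; summing
over `n` first gives `∑_m (m + 1 - x)⁻²`, whose `x^r`-coefficient is `(r + 1) ζ(r + 2)`. All
coefficients are nonnegative, so the order of summation is irrelevant.
-/

open Filter Finset Topology
open scoped ENNReal Nat PowerSeries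

section BetaSeries

open PowerSeries PowerSeries.WithPiTopology

lemma coeff_inv_C_sub_X {K : Type*} [Field K] {a : K} (ha : a ≠ 0) (r : ℕ) :
    coeff r (C a - X)⁻¹ = (a ^ (r + 1))⁻¹ := by
  have hinv : (C a - X)⁻¹ = invUnitsSub (Units.mk0 a ha) :=
    (PowerSeries.inv_eq_iff_mul_eq_one (by simpa using ha)).2
      (invUnitsSub_mul_sub (Units.mk0 a ha))
  simp [hinv]

lemma coeff_inv_C_sub_X_sq {K : Type*} [Field K] {a : K} (ha : a ≠ 0) (r : ℕ) :
    coeff r ((C a - X)⁻¹ * (C a - X)⁻¹) = (r + 1) * (a ^ (r + 2))⁻¹ := by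
  have hterm : ∀ p ∈ antidiagonal r,
      coeff p.1 (C a - X)⁻¹ * coeff p.2 (C a - X)⁻¹ = (a ^ (r + 2))⁻¹ := by
    intro p hp
    rw [coeff_inv_C_sub_X ha, coeff_inv_C_sub_X ha, ← mul_inv, ← pow_add,
      ← mem_antidiagonal.1 hp]
    ring_nf
  simp [coeff_mul, sum_congr rfl hterm]

lemma tendsto_inv_C_sub_X_atTop : Tendsto (fun a : ℝ => (C a - X)⁻¹) atTop (𝓝 0) := by
  rw [tendsto_iff_coeff_tendsto]
  intro r
  have hpow : Tendsto (fun a : ℝ => (a ^ (r + 1))⁻¹) atTop (𝓝 0) :=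
    (tendsto_pow_atTop r.succ_ne_zero).inv_tendsto_atTop
  refine hpow.congr' ?_
  filter_upwards [eventually_ne_atTop 0] with a ha
  exact (coeff_inv_C_sub_X ha r).symm

/-- The power series in `x` of the Beta function `B(n + 1, a - x) = n! / ∏_{j ≤ n} (a + j - x)`,
which connects the two sides of the evaluation of `ζ⋆(2, {1}^r)`. -/
noncomputable def betaSeries (a : ℝ) (n : ℕ) : ℝ⟦X⟧ :=
  C (n ! : ℝ) * ∏ j ∈ range (n + 1), (C (a + j) - X)⁻¹

lemma betaSeries_zero (a : ℝ) : betaSeries a 0 = (C a - X)⁻¹ := by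
  simp [betaSeries]

lemma betaSeries_succ (a : ℝ) (n : ℕ) :
    betaSeries a (n + 1) = C ((n : ℝ) + 1) * (C (a + (n + 1)) - X)⁻¹ * betaSeries a n := by
  rw [betaSeries, betaSeries, prod_range_succ _ (n + 1), Nat.factorial_succ]
  push_cast
  rw [map_mul]
  ring

lemma betaSeries_succ' (a : ℝ) (n : ℕ) :
    betaSeries a (n + 1) = C ((n : ℝ) + 1) * ((C a - X)⁻¹ * betaSeries (a + 1) n) := by
  have hshift : ∀ j : ℕ, a + ((j + 1 : ℕ) : ℝ) = a + 1 + j := fun j => by push_cast; ring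
  rw [betaSeries, betaSeries, prod_range_succ', Nat.factorial_succ]
  simp only [hshift]
  push_cast
  rw [map_mul, add_zero]
  ring

lemma betaSeries_eq_add {a : ℝ} (ha : 0 < a) (n : ℕ) :
    betaSeries a n = betaSeries a (n + 1) + betaSeries (a + 1) n := by
  have hleft : (C a - X) * betaSeries a (n + 1) = C ((n : ℝ) + 1) * betaSeries (a + 1) n := by
    have hinv := PowerSeries.mul_inv_cancel (C a - X) (by simpa using ha.ne')
    rw [betaSeries_succ']
    linear_combination C ((n : ℝ) + 1) * betaSeries (a + 1) n * hinv
  have hright : (C (a + (n + 1)) - X) * betaSeries a (n + 1) =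
      C ((n : ℝ) + 1) * betaSeries a n := by
    have hinv := PowerSeries.mul_inv_cancel (C (a + (n + 1)) - X)
      (by simpa using (by positivity : a + ((n : ℝ) + 1) ≠ 0))
    rw [betaSeries_succ]
    linear_combination C ((n : ℝ) + 1) * betaSeries a n * hinv
  have hn : C ((n : ℝ) + 1) ≠ 0 := by
    rw [Ne, map_eq_zero_iff C C_injective]
    positivity
  apply mul_left_cancel₀ hn
  rw [map_add C a] at hright
  linear_combination hleft - hright

lemma coeff_betaSeries_nonneg {a : ℝ} (ha : 0 < a) (n r : ℕ) : 0 ≤ coeff r (betaSeries a n) := by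
  have hinv : ∀ b : ℝ, 0 < b → ∀ i, 0 ≤ coeff i (C b - X)⁻¹ := fun b hb i => by
    rw [coeff_inv_C_sub_X hb.ne']
    positivity
  induction n generalizing r with
  | zero => simpa only [betaSeries_zero] using hinv a ha r
  | succ n ih =>
    rw [betaSeries_succ, mul_assoc, coeff_C_mul, coeff_mul]
    exact mul_nonneg (by positivity) <| sum_nonneg fun p _ =>
      mul_nonneg (hinv _ (by positivity) _) (ih _)

lemma tendsto_betaSeries_left (n : ℕ) :
    Tendsto (fun a : ℝ => betaSeries a n) atTop (𝓝 0) := by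
  have hfactor : ∀ j ∈ range (n + 1),
      Tendsto (fun a : ℝ => (C (a + j) - X)⁻¹) atTop (𝓝 0) := fun j _ =>
    tendsto_inv_C_sub_X_atTop.comp (tendsto_atTop_add_const_right _ _ tendsto_id)
  simpa [betaSeries] using (tendsto_finsetProd _ hfactor).const_mul (C (n ! : ℝ))

lemma hasSum_of_eq_succ_add {f g : ℕ → ℝ⟦X⟧} (hg : ∀ n r, 0 ≤ coeff r (g n))
    (hfg : ∀ n, f n = f (n + 1) + g n) (hf : Tendsto f atTop (𝓝 0)) : HasSum g (f 0) := by
  rw [hasSum_iff_hasSum_coeff]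
  intro r
  rw [hasSum_iff_tendsto_nat_of_nonneg (fun n => hg n r)]
  have hpartial : ∀ N, ∑ n ∈ range N, g n = f 0 - f N := fun N => by
    rw [← sum_range_sub' f N]
    exact sum_congr rfl fun n _ => eq_sub_of_add_eq' (hfg n).symm
  have hlim : Tendsto (fun N => f 0 - f N) atTop (𝓝 (f 0)) := by
    simpa using hf.const_sub (f 0)
  simpa [← map_sum, hpartial] using (tendsto_iff_coeff_tendsto _ _ _ _).1 hlim r

lemma hasSum_betaSeries_succ_right {a : ℝ} (ha : 0 < a) (n : ℕ) :
    HasSum (fun m : ℕ => betaSeries (a + m) (n + 1)) (betaSeries a n) := by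
  have htend : Tendsto (fun m : ℕ => betaSeries (a + m) n) atTop (𝓝 0) :=
    (tendsto_betaSeries_left n).comp
      (tendsto_atTop_add_const_left _ a tendsto_natCast_atTop_atTop)
  have hpascal : ∀ m : ℕ, betaSeries (a + m) n =
      betaSeries (a + (m + 1 : ℕ)) n + betaSeries (a + m) (n + 1) := fun m => by
    rw [betaSeries_eq_add (by positivity) n, add_comm]
    push_cast
    rw [add_assoc]
  simpa using hasSum_of_eq_succ_add
    (fun m r => coeff_betaSeries_nonneg (by positivity : 0 < a + m) (n + 1) r) hpascal htend

end BetaSeries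

section TruncatedZetaStar

/-- The truncated multiple zeta-star value `ζ⋆_n(k₁, …, k_s)`, the sum of `∏ n_i ^ (-k_i)` over
`n ≥ n₁ ≥ ⋯ ≥ n_s ≥ 1`, with `n₁` written as `j + 1`. -/
noncomputable def truncatedZetaStar : List ℕ → ℕ → ℝ
  | [], _ => 1
  | k :: l, n => ∑ j ∈ range n, (((j : ℝ) + 1) ^ k)⁻¹ * truncatedZetaStar l (j + 1)

lemma truncatedZetaStar_nonneg (l : List ℕ) (n : ℕ) : 0 ≤ truncatedZetaStar l n := by
  induction l generalizing n with
  | nil => exact zero_le_one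
  | cons k l ih => exact sum_nonneg fun j _ => mul_nonneg (by positivity) (ih (j + 1))

lemma truncatedZetaStar_cons_succ (k : ℕ) (l : List ℕ) (n : ℕ) :
    truncatedZetaStar (k :: l) (n + 1) =
      truncatedZetaStar (k :: l) n + (((n : ℝ) + 1) ^ k)⁻¹ * truncatedZetaStar l (n + 1) :=
  sum_range_succ _ n

lemma truncatedZetaStar_replicate_one_le (t n : ℕ) :
    truncatedZetaStar (List.replicate t 1) (n + 1) ≤ n + 1 := by
  induction t generalizing n with
  | zero => simp [truncatedZetaStar]
  | succ t ih =>
    have hterm : ∀ j ∈ range (n + 1),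
        (((j : ℝ) + 1) ^ 1)⁻¹ * truncatedZetaStar (List.replicate t 1) (j + 1) ≤ 1 := fun j _ => by
      rw [pow_one, inv_mul_le_one₀ (by positivity)]
      exact ih j
    simpa [List.replicate_succ, truncatedZetaStar] using sum_le_card_nsmul _ _ _ hterm

lemma le_truncatedZetaStar_replicate_one (t n : ℕ) :
    (n : ℝ) - n * (n - 1) / 2 ^ (t + 1) ≤ truncatedZetaStar (List.replicate t 1) n := by
  induction t generalizing n with
  | zero =>
    have hsq : (0 : ℝ) ≤ (n - 1) * (n - 2) := by
      rcases n with _ | _ | n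
      · norm_num
      · norm_num
      · push_cast
        ring_nf
        positivity
    simp only [List.replicate_zero, truncatedZetaStar]
    linarith
  | succ t ih =>
    have hgauss : ∑ j ∈ range n, (j : ℝ) = n * (n - 1) / 2 := by
      induction n with
      | zero => simp
      | succ n ihn => rw [sum_range_succ, ihn]; push_cast; ring
    calc (n : ℝ) - n * (n - 1) / 2 ^ (t + 1 + 1)
        = ∑ j ∈ range n, (1 - (j : ℝ) / 2 ^ (t + 1)) := by
          rw [sum_sub_distrib, ← sum_div, hgauss]
          simp only [sum_const, card_range, nsmul_eq_mul, mul_one]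
          ring
      _ ≤ ∑ j ∈ range n,
            (((j : ℝ) + 1) ^ 1)⁻¹ * truncatedZetaStar (List.replicate t 1) (j + 1) := by
          gcongr with j
          rw [pow_one, le_inv_mul_iff₀ (by positivity)]
          refine le_trans (le_of_eq ?_) (ih (j + 1))
          push_cast
          ring

lemma tendsto_truncatedZetaStar_replicate_one (n : ℕ) :
    Tendsto (fun t => truncatedZetaStar (List.replicate t 1) (n + 1)) atTop (𝓝 (n + 1)) := by
  have hlower : Tendsto (fun t : ℕ => ((n + 1 : ℕ) : ℝ) -
      (n + 1 : ℕ) * ((n + 1 : ℕ) - 1) / 2 ^ (t + 1)) atTop (𝓝 (n + 1)) := by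
    have hpow : Tendsto (fun t : ℕ => (2 : ℝ) ^ (t + 1)) atTop atTop :=
      (tendsto_pow_atTop_atTop_of_one_lt one_lt_two).comp (tendsto_add_atTop_nat 1)
    simpa using (hpow.const_div_atTop (((n + 1 : ℕ) : ℝ) * ((n + 1 : ℕ) - 1))).const_sub
      ((n + 1 : ℕ) : ℝ)
  exact tendsto_of_tendsto_of_tendsto_of_le_of_le hlower tendsto_const_nhds
    (fun t => le_truncatedZetaStar_replicate_one t (n + 1))
    (fun t => truncatedZetaStar_replicate_one_le t n)

lemma truncatedZetaStar_append_replicate_le (l : List ℕ) (p t n : ℕ) :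
    truncatedZetaStar (l ++ (p + 1) :: List.replicate t 1) n ≤ truncatedZetaStar (l ++ [p]) n := by
  induction l generalizing n with
  | nil =>
    refine sum_le_sum fun j _ => ?_
    rw [inv_mul_le_iff₀ (by positivity)]
    refine (truncatedZetaStar_replicate_one_le t j).trans_eq ?_
    simp only [truncatedZetaStar]
    field_simp
    ring
  | cons k l ih => exact sum_le_sum fun j _ => mul_le_mul_of_nonneg_left (ih _) (by positivity)

lemma tendsto_truncatedZetaStar_append_replicate (l : List ℕ) (p n : ℕ) :
    Tendsto (fun t => truncatedZetaStar (l ++ (p + 1) :: List.replicate t 1) n) atTop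
      (𝓝 (truncatedZetaStar (l ++ [p]) n)) := by
  induction l generalizing n with
  | nil =>
    refine tendsto_finsetSum _ fun j _ => ?_
    have hlim : (((j : ℝ) + 1) ^ p)⁻¹ * truncatedZetaStar [] (j + 1) =
        (((j : ℝ) + 1) ^ (p + 1))⁻¹ * (j + 1) := by
      simp only [truncatedZetaStar]
      field_simp
      ring
    rw [hlim]
    exact (tendsto_truncatedZetaStar_replicate_one j).const_mul _
  | cons k l ih => exact tendsto_finsetSum _ fun j _ => (ih _).const_mul _

lemma tendsto_inv_mul_truncatedZetaStar_replicate_one (r : ℕ) :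
    Tendsto (fun n : ℕ => (n : ℝ)⁻¹ * truncatedZetaStar (List.replicate r 1) n) atTop (𝓝 0) := by
  induction r with
  | zero => simpa [truncatedZetaStar] using tendsto_inv_atTop_nhds_zero_nat (𝕜 := ℝ)
  | succ r ih =>
    simpa [List.replicate_succ, truncatedZetaStar] using ((tendsto_add_atTop_iff_nat 1).2 ih).cesaro

end TruncatedZetaStar

section Evaluation

open PowerSeries PowerSeries.WithPiTopology

lemma mk_truncatedZetaStar_zero :
    PowerSeries.mk (fun r => truncatedZetaStar (List.replicate r 1) 0) = 1 := by
  ext r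
  cases r <;> simp [truncatedZetaStar, List.replicate_succ, coeff_one]

lemma mk_truncatedZetaStar_succ (n : ℕ) :
    PowerSeries.mk (fun r => truncatedZetaStar (List.replicate r 1) (n + 1)) =
      C ((n : ℝ) + 1) * (C ((n : ℝ) + 1) - X)⁻¹ *
        PowerSeries.mk (fun r => truncatedZetaStar (List.replicate r 1) n) := by
  have hn : (n : ℝ) + 1 ≠ 0 := by positivity
  have hrec : PowerSeries.mk (fun r => truncatedZetaStar (List.replicate r 1) (n + 1)) *
      (C ((n : ℝ) + 1) - X) =
        C ((n : ℝ) + 1) * PowerSeries.mk (fun r => truncatedZetaStar (List.replicate r 1) n) := by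
    ext r
    rw [mul_sub, map_sub, coeff_mul_C, coeff_C_mul]
    cases r with
    | zero => simp [truncatedZetaStar]
    | succ r =>
      rw [coeff_succ_mul_X]
      simp only [coeff_mk, List.replicate_succ, truncatedZetaStar_cons_succ]
      field_simp
      ring
  rw [mul_right_comm]
  exact (PowerSeries.eq_mul_inv_iff_mul_eq (by simpa using hn)).2 hrec

lemma mk_truncatedZetaStar_eq_betaSeries (n : ℕ) :
    PowerSeries.mk (fun r => truncatedZetaStar (List.replicate r 1) (n + 1)) =
      C ((n : ℝ) + 1) * betaSeries 1 n := by
  induction n with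
  | zero => rw [mk_truncatedZetaStar_succ, mk_truncatedZetaStar_zero, betaSeries_zero]; simp
  | succ n ih =>
    rw [mk_truncatedZetaStar_succ, ih, betaSeries_succ]
    push_cast
    rw [add_comm (1 : ℝ)]
    ring

lemma coeff_betaSeries_one (n r : ℕ) :
    coeff r (betaSeries 1 n) =
      ((n : ℝ) + 1)⁻¹ * truncatedZetaStar (List.replicate r 1) (n + 1) := by
  have hcoeff := congrArg (coeff r) (mk_truncatedZetaStar_eq_betaSeries n)
  rw [coeff_mk, coeff_C_mul] at hcoeff
  rw [hcoeff, inv_mul_cancel_left₀ (by positivity)]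

lemma coeff_betaSeries_natCast_le (m n r : ℕ) :
    coeff r (betaSeries (1 + m) n) ≤ coeff r (betaSeries 1 n) := by
  induction m with
  | zero => simp
  | succ m ih =>
    have hpascal := congrArg (coeff r) (betaSeries_eq_add (by positivity : 0 < 1 + (m : ℝ)) n)
    have hnonneg := coeff_betaSeries_nonneg (by positivity : 0 < 1 + (m : ℝ)) (n + 1) r
    rw [map_add] at hpascal
    push_cast
    rw [← add_assoc]
    linarith

lemma tendsto_betaSeries_right (m : ℕ) :
    Tendsto (fun n => betaSeries (1 + m) n) atTop (𝓝 0) := by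
  rw [tendsto_iff_coeff_tendsto]
  intro r
  have hone : Tendsto (fun n => coeff r (betaSeries 1 n)) atTop (𝓝 0) := by
    simpa [coeff_betaSeries_one] using
      (tendsto_add_atTop_iff_nat 1).2 (tendsto_inv_mul_truncatedZetaStar_replicate_one r)
  exact squeeze_zero (fun n => coeff_betaSeries_nonneg (by positivity) n r)
    (fun n => coeff_betaSeries_natCast_le m n r) hone

lemma hasSum_betaSeries_add_one_left (m : ℕ) :
    HasSum (fun n => betaSeries (1 + m + 1) n) (C ((1 : ℝ) + m) - X)⁻¹ := by
  rw [← betaSeries_zero]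
  exact hasSum_of_eq_succ_add
    (fun n r => coeff_betaSeries_nonneg (by positivity : (0 : ℝ) < 1 + m + 1) n r)
    (betaSeries_eq_add (by positivity)) (tendsto_betaSeries_right m)

lemma hasSum_comm_of_nonneg {ι κ : Type*} {f : ι → κ → ℝ} {a : ι → ℝ} {b : κ → ℝ} {s : ℝ}
    (hf : ∀ i j, 0 ≤ f i j) (ha : ∀ i, HasSum (f i) (a i)) (hb : ∀ j, HasSum (f · j) (b j))
    (hs : HasSum a s) : HasSum b s := by
  have hsummable : Summable (Function.uncurry f) :=
    (summable_prod_of_nonneg fun p => hf p.1 p.2).2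
      ⟨fun i => (ha i).summable, by simpa [(ha _).tsum_eq] using hs.summable⟩
  have hsum : HasSum (Function.uncurry f) s := by
    rw [hs.unique (hsummable.hasSum.prod_fiberwise ha)]
    exact hsummable.hasSum
  exact ((Equiv.prodComm κ ι).hasSum_iff.2 hsum).prod_fiberwise hb

lemma hasSum_truncatedZetaStar_replicate_one (r : ℕ) :
    HasSum (fun n : ℕ => (((n : ℝ) + 1) ^ 2)⁻¹ * truncatedZetaStar (List.replicate r 1) (n + 1))
      ((r + 1) * ∑' n : ℕ+, ((n : ℝ) ^ (r + 2))⁻¹) := by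
  have hcoeff : Continuous (coeff r : ℝ⟦X⟧ → ℝ) := continuous_coeff ℝ r
  have hsymm : ∀ m n : ℕ, coeff r ((C ((1 : ℝ) + m) - X)⁻¹ * betaSeries (1 + m + 1) n) =
      ((n : ℝ) + 1)⁻¹ * coeff r (betaSeries (1 + m) (n + 1)) := fun m n => by
    rw [betaSeries_succ', coeff_C_mul, inv_mul_cancel_left₀ (by positivity)]
  refine hasSum_comm_of_nonneg
    (f := fun m n : ℕ => coeff r ((C ((1 : ℝ) + m) - X)⁻¹ * betaSeries (1 + m + 1) n))
    (a := fun m : ℕ => ((r : ℝ) + 1) * ((1 + m : ℝ) ^ (r + 2))⁻¹) ?_ ?_ ?_ ?_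
  · intro m n
    rw [hsymm]
    exact mul_nonneg (by positivity) (coeff_betaSeries_nonneg (by positivity) _ _)
  · intro m
    rw [← coeff_inv_C_sub_X_sq (by positivity : (1 : ℝ) + m ≠ 0)]
    exact ((hasSum_betaSeries_add_one_left m).mul_left _).map (coeff r) hcoeff
  · intro n
    simp only [hsymm]
    rw [sq, mul_inv, mul_assoc, ← coeff_betaSeries_one]
    exact ((hasSum_betaSeries_succ_right one_pos n).map (coeff r) hcoeff).mul_left _
  · rw [tsum_pnat_eq_tsum_succ (f := fun n : ℕ => ((n : ℝ) ^ (r + 2))⁻¹)]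
    refine HasSum.mul_left _ ?_
    have hzeta : Summable fun m : ℕ => (((m + 1 : ℕ) : ℝ) ^ (r + 2))⁻¹ :=
      (summable_nat_add_iff 1).2 (Real.summable_nat_pow_inv.2 (by omega : 1 < r + 2))
    simpa [add_comm] using hzeta.hasSum

end Evaluation

section ZetaStar

/-- The weakly decreasing tuples of positive integers of length `s` with entries at most `N`;
`N = ⊤` is allowed so that `DecTuple s` and its truncations obey the same recursion. -/
def BoundedDecTuple (s : ℕ) (N : ℕ∞) : Set (Fin s → ℕ) :=
  {f ∈ DecTuple s | ∀ i, (f i : ℕ∞) ≤ N}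

/-- The multiple zeta-star value over `BoundedDecTuple s N`, valued in `ℝ≥0∞` so that the sum may
be rearranged without checking convergence. -/
noncomputable def eZetaStar {s : ℕ} (k : Fin s → ℕ) (N : ℕ∞) : ℝ≥0∞ :=
  ∑' f : BoundedDecTuple s N, ∏ i, (((f : Fin s → ℕ) i : ℝ≥0∞) ^ k i)⁻¹

lemma cons_mem_boundedDecTuple_iff {s : ℕ} {N : ℕ∞} {n : ℕ} {f : Fin s → ℕ} :
    (Fin.cons n f : Fin (s + 1) → ℕ) ∈ BoundedDecTuple (s + 1) N ↔
      (1 ≤ n ∧ (n : ℕ∞) ≤ N) ∧ f ∈ BoundedDecTuple s n := by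
  have hbound : (n : ℕ∞) ≤ N → (∀ i, f i ≤ n) → ∀ i, (f i : ℕ∞) ≤ N := fun hn hf i =>
    (Nat.cast_le.2 (hf i)).trans hn
  simp only [BoundedDecTuple, DecTuple, Set.mem_ofPred_eq, Fin.forall_fin_succ, Fin.cons_zero,
    Fin.cons_succ, Nat.cast_le, Fin.succ_le_succ_iff, Fin.zero_le, le_refl, forall_const,
    true_and, Fin.le_zero_iff, Fin.succ_ne_zero, IsEmpty.forall_iff]
  tauto

lemma eZetaStar_fin_zero (k : Fin 0 → ℕ) (N : ℕ∞) : eZetaStar k N = 1 := by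
  have hmem : (default : Fin 0 → ℕ) ∈ BoundedDecTuple 0 N := by simp [BoundedDecTuple, DecTuple]
  rw [eZetaStar, tsum_eq_single ⟨default, hmem⟩ fun f hf => absurd (Subsingleton.elim _ _) hf]
  simp

lemma eZetaStar_succ {s : ℕ} (k : Fin (s + 1) → ℕ) (N : ℕ∞) :
    eZetaStar k N = ∑' n : ℕ, if ((n + 1 : ℕ) : ℕ∞) ≤ N then
      (((n + 1 : ℕ) : ℝ≥0∞) ^ k 0)⁻¹ * eZetaStar (Fin.tail k) (n + 1 : ℕ) else 0 := by
  classical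
  rw [eZetaStar, _root_.tsum_subtype _ fun f : Fin (s + 1) → ℕ => ∏ i, ((f i : ℝ≥0∞) ^ k i)⁻¹,
    ← (Fin.consEquiv fun _ => ℕ).tsum_eq, ENNReal.tsum_prod', tsum_eq_zero_add' ENNReal.summable]
  have hzero : ∀ f : Fin s → ℕ, Fin.cons 0 f ∉ BoundedDecTuple (s + 1) N := fun f hf => by
    simpa using (cons_mem_boundedDecTuple_iff.1 hf).1.1
  simp only [Fin.consEquiv, Equiv.coe_fn_mk, Set.indicator_of_notMem (hzero _), tsum_zero, zero_add]
  refine tsum_congr fun n => ?_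
  split_ifs with hn <;> push_cast at hn
  · rw [eZetaStar, _root_.tsum_subtype _ fun f : Fin s → ℕ => ∏ i, ((f i : ℝ≥0∞) ^ Fin.tail k i)⁻¹,
      ← ENNReal.tsum_mul_left]
    refine tsum_congr fun f => ?_
    simp [Set.indicator_apply, cons_mem_boundedDecTuple_iff, hn, Fin.prod_univ_succ, Fin.tail]
  · simp [cons_mem_boundedDecTuple_iff, hn]

lemma eZetaStar_get_natCast (l : List ℕ) (n : ℕ) :
    eZetaStar l.get n = ENNReal.ofReal (truncatedZetaStar l n) := by
  induction l generalizing n with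
  | nil => simp [truncatedZetaStar, eZetaStar_fin_zero]
  | cons k l ih =>
    have hterm : ∀ j : ℕ, ENNReal.ofReal ((((j : ℝ) + 1) ^ k)⁻¹ * truncatedZetaStar l (j + 1)) =
        (((j + 1 : ℕ) : ℝ≥0∞) ^ k)⁻¹ * eZetaStar l.get (j + 1 : ℕ) := fun j => by
      rw [ih, ENNReal.ofReal_mul (by positivity), ENNReal.ofReal_inv_of_pos (by positivity),
        ENNReal.ofReal_pow (by positivity), ← ENNReal.ofReal_natCast (j + 1), Nat.cast_succ]
    rw [eZetaStar_succ, tsum_eq_sum (s := range n), truncatedZetaStar,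
      ENNReal.ofReal_sum_of_nonneg
        fun j _ => mul_nonneg (by positivity) (truncatedZetaStar_nonneg l (j + 1))]
    · refine sum_congr rfl fun j hj => ?_
      rw [if_pos (Nat.cast_le.2 (mem_range.1 hj)), hterm]
      rfl
    · intro j hj
      exact if_neg fun hle => hj (mem_range.2 (Nat.cast_le.1 hle))

lemma zetaStar_eq_toReal_eZetaStar {s : ℕ} (k : Fin s → ℕ) :
    zetaStar k = (eZetaStar k ⊤).toReal := by
  have hset : BoundedDecTuple s ⊤ = DecTuple s := by simp [BoundedDecTuple]
  have hne_top : ∀ f : DecTuple s, ∏ i, (((f : Fin s → ℕ) i : ℝ≥0∞) ^ k i)⁻¹ ≠ ⊤ := fun f =>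
    ENNReal.prod_ne_top fun i _ => by
      simp [(Nat.one_le_iff_ne_zero.1 (f.2.1 i))]
  rw [eZetaStar, hset, ENNReal.tsum_toReal_eq hne_top]
  simp [zetaStar, ENNReal.toReal_prod]

lemma zetaStar_get_cons (k : ℕ) (l : List ℕ) :
    zetaStar (k :: l).get =
      ∑' n : ℕ, (((n : ℝ) + 1) ^ k)⁻¹ * truncatedZetaStar l (n + 1) := by
  have htail : Fin.tail (k :: l).get = l.get := rfl
  rw [zetaStar_eq_toReal_eZetaStar, eZetaStar_succ]
  simp only [le_top, if_true, htail, eZetaStar_get_natCast]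
  rw [ENNReal.tsum_toReal_eq fun n => ENNReal.mul_ne_top (by simp) ENNReal.ofReal_ne_top]
  refine tsum_congr fun n => ?_
  rw [ENNReal.toReal_mul, ENNReal.toReal_inv, ENNReal.toReal_pow, ENNReal.toReal_natCast,
    Nat.cast_succ, ENNReal.toReal_ofReal (truncatedZetaStar_nonneg l (n + 1)), List.get_cons_zero]

lemma tendsto_zetaStar_get_append_replicate {k p : ℕ} {l : List ℕ}
    (hs : Summable fun n : ℕ => (((n : ℝ) + 1) ^ k)⁻¹ * truncatedZetaStar (l ++ [p]) (n + 1)) :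
    Tendsto (fun t => zetaStar (k :: (l ++ (p + 1) :: List.replicate t 1)).get) atTop
      (𝓝 (zetaStar (k :: (l ++ [p])).get)) := by
  simp only [zetaStar_get_cons]
  refine tendsto_tsum_of_dominated_convergence hs
    (fun n => (tendsto_truncatedZetaStar_append_replicate l p (n + 1)).const_mul _)
    (Eventually.of_forall fun t n => ?_)
  rw [Real.norm_of_nonneg (mul_nonneg (by positivity) (truncatedZetaStar_nonneg _ _))]
  exact mul_le_mul_of_nonneg_left (truncatedZetaStar_append_replicate_le l p t _) (by positivity)

lemma zetaStar_get_ofFn {s : ℕ} (k : Fin s → ℕ) : zetaStar (List.ofFn k).get = zetaStar k := by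
  have hcast : ∀ {m : ℕ} (h : m = s), zetaStar (k ∘ Fin.cast h) = zetaStar k := by
    rintro _ rfl
    rfl
  rw [← hcast (List.length_ofFn (f := k))]
  congr 1
  ext i
  exact List.get_ofFn k i

lemma zetaStar_two_replicate_one (r : ℕ) :
    zetaStar (2 :: List.replicate r 1).get = (r + 1) * ∑' n : ℕ+, ((n : ℝ) ^ (r + 2))⁻¹ := by
  rw [zetaStar_get_cons, (hasSum_truncatedZetaStar_replicate_one r).tsum_eq]

lemma ofFn_eq_two_replicate_two_replicate (a t : ℕ) :
    List.ofFn (fun i : Fin (t + (a + 2)) => if (i : ℕ) = 0 ∨ (i : ℕ) = a + 1 then 2 else 1) =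
      2 :: (List.replicate a 1 ++ 2 :: List.replicate t 1) := by
  apply List.ext_getElem
  · simp only [List.length_ofFn, List.length_cons, List.length_append, List.length_replicate]
    omega
  · intro i _ _
    grind

end ZetaStar

/-- the infinite multiple zeta-star value with index
(2, {1}^{r−1}, 2, 1, 1, …) equals (r+1)·ζ(r+2). -/
theorem stmt10 (r : ℕ) (hr : 1 ≤ r) :
    Filter.Tendsto
      (fun s : ℕ => zetaStar (fun i : Fin s =>
        if (i : ℕ) = 0 ∨ (i : ℕ) = r then 2 else 1))
      Filter.atTop
      (nhds ((r + 1) * ∑' n : ℕ+, ((n : ℝ) ^ (r + 2))⁻¹)) := by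
  obtain ⟨a, rfl⟩ := Nat.exists_eq_add_of_le' hr
  have hindex (t : ℕ) : zetaStar (fun i : Fin (t + (a + 2)) =>
      if (i : ℕ) = 0 ∨ (i : ℕ) = a + 1 then 2 else 1) =
        zetaStar (2 :: (List.replicate a 1 ++ 2 :: List.replicate t 1)).get := by
    rw [← ofFn_eq_two_replicate_two_replicate, zetaStar_get_ofFn]
  have happend : List.replicate a 1 ++ [1] = List.replicate (a + 1) 1 :=
    List.replicate_succ'.symm
  have hlim := tendsto_zetaStar_get_append_replicate (k := 2) (p := 1) (l := List.replicate a 1)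
    (happend ▸ (hasSum_truncatedZetaStar_replicate_one (a + 1)).summable)
  rw [happend, zetaStar_two_replicate_one] at hlim
  rw [← tendsto_add_atTop_iff_nat (a + 2)]
  exact hlim.congr fun t => (hindex t).symm
end

section
/- For any admissible index (k_1, …, k_r) and any integer q ≥ 1, the infinite multiple zeta-star value satisfies ζ*(k_1, …, k_r, {q}^∞) = Σ_{n_1 ≥ ⋯ ≥ n_r ≥ 1} (1/(n_1^{k_1} ⋯ n_r^{k_r})) · ∏_{n=2}^{n_r} (1 − 1/n^q)^{−1}, where the inner product is 1 when n_r = 1. -/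
open scoped BigOperators

/-!
Summing out the last variable of a star sum over `n_1 ≥ ⋯ ≥ n_{r+s}` turns a weight `w` on that
variable into the weight `m ↦ ∑_{j ≤ m} w(j) / j^q` on the previous one. Doing this `s` times gives
`ζ*(k_1, …, k_r, {q}^s)` as a star sum over `n_1 ≥ ⋯ ≥ n_r` with the weight `ζ*_{n_r}({q}^s)`,
which increases with `s` to the fixed point `∏_{n=2}^{n_r} (1 - n^{-q})⁻¹` of this operator.
Dominated convergence then proves the theorem as soon as the limiting series is summable. For
admissible indices, the limiting weight is bounded when `q ≥ 2` and equals `n_r` when `q = 1`; its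
growth is followed through the same operator until only the sum over `n_1` is left.
-/

open Filter Topology Finset

namespace DecTuple

/-- The decreasing tuple without its last, hence smallest, entry. -/
def init {n : ℕ} (f : DecTuple (n + 1)) : DecTuple n :=
  ⟨Fin.init f.1, fun i => f.2.1 i.castSucc, fun i j hij => f.2.2 i.castSucc j.castSucc hij⟩

lemma snoc_mem {n : ℕ} (f : DecTuple (n + 1)) (j : Icc 1 (f.1 (Fin.last n))) :
    Fin.snoc (α := fun _ => ℕ) f.1 (j : ℕ) ∈ DecTuple (n + 2) := by
  refine ⟨fun i => ?_, fun i i' hii' => ?_⟩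
  · cases i using Fin.lastCases with
    | last => simpa only [Fin.snoc_last] using (mem_Icc.1 j.2).1
    | cast i => simpa only [Fin.snoc_castSucc] using f.2.1 i
  · cases i' using Fin.lastCases with
    | last =>
      cases i using Fin.lastCases with
      | last => rfl
      | cast i =>
        simpa only [Fin.snoc_last, Fin.snoc_castSucc] using
          (mem_Icc.1 j.2).2.trans (f.2.2 i _ (Fin.le_last i))
    | cast i' =>
      cases i using Fin.lastCases with
      | last => exact absurd hii' (Fin.castSucc_lt_last i').not_ge
      | cast i => simpa only [Fin.snoc_castSucc] using f.2.2 i i' hii'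

/-- The tuple `n_1 ≥ ⋯ ≥ n_r ≥ j` obtained by appending an entry to a nonempty decreasing tuple. -/
def snoc {n : ℕ} (f : DecTuple (n + 1)) (j : Icc 1 (f.1 (Fin.last n))) : DecTuple (n + 2) :=
  ⟨Fin.snoc (α := fun _ => ℕ) f.1 j, snoc_mem f j⟩

/-- Decreasing tuples of length `n + 2`, fibred over the tuple of their first `n + 1` entries. -/
def sigmaSnocEquiv (n : ℕ) :
    (Σ f : DecTuple (n + 1), Icc 1 (f.1 (Fin.last n))) ≃ DecTuple (n + 2) where
  toFun p := snoc p.1 p.2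
  invFun f := ⟨init f, f.1 (Fin.last (n + 1)), mem_Icc.2 ⟨f.2.1 _, f.2.2 _ _ (Fin.le_last _)⟩⟩
  left_inv := by
    rintro ⟨f, j, hj⟩
    have hinit : init (snoc f ⟨j, hj⟩) = f := Subtype.ext (Fin.init_snoc (α := fun _ => ℕ) j f.1)
    refine Sigma.ext hinit ?_
    refine (Subtype.heq_iff_coe_eq fun i => iff_of_eq ?_).2 ?_
    · exact congrArg (fun g : DecTuple (n + 1) => i ∈ Icc 1 (g.1 (Fin.last n))) hinit
    · exact Fin.snoc_last (α := fun _ => ℕ) j f.1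
  right_inv f := Subtype.ext (Fin.snoc_init_self f.1)

end DecTuple

/-- The operator `w ↦ (m ↦ ∑_{1 ≤ j ≤ m} w(j) / j^q)` that summing out the last variable of a
star sum, with exponent `q`, induces on weights. -/
noncomputable def starOp (q : ℕ) (w : ℕ → ℝ) (m : ℕ) : ℝ :=
  ∑ j ∈ Icc 1 m, ((j : ℝ) ^ q)⁻¹ * w j

/-- The truncated zeta-star value `ζ*_m({q}^s)`, the sum over `m ≥ n_1 ≥ ⋯ ≥ n_s ≥ 1`, encoded as
the `s`-th iterate of `starOp q` on the constant weight `1`. -/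
noncomputable def truncZetaStar (q s : ℕ) : ℕ → ℝ :=
  (starOp q)^[s] 1

/-- The product `∏_{n=2}^m (1 - n^{-q})⁻¹`, which is the truncated value `ζ*_m({q}^∞)`. -/
noncomputable def tailProd (q m : ℕ) : ℝ :=
  ∏ n ∈ Icc 2 m, (1 - ((n : ℝ) ^ q)⁻¹)⁻¹

/-- The general term `w(n_r) / (n_1^{k_1} ⋯ n_r^{k_r})` of a star sum of length `r = n + 1` with a
weight on the last variable. The exponents are the first `n + 1` terms of a sequence, so that the
length can vary while the index stays fixed. -/
noncomputable def starTerm (n : ℕ) (k : ℕ → ℕ) (w : ℕ → ℝ) (f : DecTuple (n + 1)) : ℝ :=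
  (∏ i, ((f.1 i : ℝ) ^ k i)⁻¹) * w (f.1 (Fin.last n))

/-- The infinite index `(k_1, …, k_r, q, q, …)`. -/
def padIndex {r : ℕ} (k : Fin r → ℕ) (q i : ℕ) : ℕ :=
  if h : i < r then k ⟨i, h⟩ else q

section StarOp

variable {p q : ℕ} {v w : ℕ → ℝ}

lemma starOp_one_right (q : ℕ) (w : ℕ → ℝ) : starOp q w 1 = w 1 := by
  simp [starOp]

lemma starOp_succ (q : ℕ) (w : ℕ → ℝ) (m : ℕ) :
    starOp q w (m + 1) = starOp q w m + (((m + 1 : ℕ) : ℝ) ^ q)⁻¹ * w (m + 1) :=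
  sum_Icc_succ_top (by omega) _

lemma starOp_nonneg (hw : 0 ≤ w) : 0 ≤ starOp q w := fun _ =>
  sum_nonneg fun j _ => mul_nonneg (by positivity) (hw j)

lemma starOp_le_starOp (hpq : p ≤ q) (hv : 0 ≤ v) (hvw : ∀ j, 1 ≤ j → v j ≤ w j) (m : ℕ) :
    starOp q v m ≤ starOp p w m := by
  refine sum_le_sum fun j hj => ?_
  have hj1 : 1 ≤ j := (mem_Icc.1 hj).1
  exact mul_le_mul (inv_pow_le_inv_pow_of_le (mod_cast hj1) hpq) (hvw j hj1) (hv j)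
    (by positivity)

lemma starOp_one_natCast (m : ℕ) : starOp 1 (fun j => (j : ℝ)) m = m := by
  induction m with
  | zero => simp [starOp]
  | succ m ih =>
    rw [starOp_succ, ih, pow_one, inv_mul_cancel₀ (by positivity), Nat.cast_succ]

lemma inv_sqrt_succ_le (m : ℕ) :
    (√((m + 1 : ℕ) : ℝ))⁻¹ ≤ 2 * (√((m + 1 : ℕ) : ℝ) - √(m : ℝ)) := by
  have hpos : 0 < √((m + 1 : ℕ) : ℝ) := Real.sqrt_pos.2 (by positivity)
  have hsq : √(m : ℝ) ^ 2 = m := Real.sq_sqrt (by positivity)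
  have hsq' : √((m + 1 : ℕ) : ℝ) ^ 2 = m + 1 := by
    rw [Real.sq_sqrt (by positivity), Nat.cast_succ]
  rw [inv_le_iff_one_le_mul₀ hpos]
  nlinarith [sq_nonneg (√((m + 1 : ℕ) : ℝ) - √(m : ℝ))]

lemma starOp_one_sqrt_le (m : ℕ) : starOp 1 (fun j => √(j : ℝ)) m ≤ 2 * √(m : ℝ) := by
  induction m with
  | zero => simp [starOp]
  | succ m ih =>
    rw [starOp_succ, pow_one, inv_mul_eq_div, Real.sqrt_div_self]
    linarith [inv_sqrt_succ_le m]

lemma starOp_natCast_le_sqrt (hq : 2 ≤ q) (m : ℕ) :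
    starOp q (fun j => (j : ℝ)) m ≤ 2 * √(m : ℝ) :=
  calc starOp q (fun j => (j : ℝ)) m ≤ starOp 2 (fun j => (j : ℝ)) m :=
        starOp_le_starOp hq (fun j => j.cast_nonneg) (fun _ _ => le_rfl) m
    _ = starOp 1 1 m := sum_congr rfl fun j hj => by
        have hj0 : (j : ℝ) ≠ 0 := by have := (mem_Icc.1 hj).1; positivity
        simp only [Pi.one_apply]
        field_simp
    _ ≤ starOp 1 (fun j => √(j : ℝ)) m :=
        starOp_le_starOp le_rfl zero_le_one
          (fun j hj => Real.one_le_sqrt.2 (mod_cast hj)) m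
    _ ≤ 2 * √(m : ℝ) := starOp_one_sqrt_le m

end StarOp

section TailProd

variable {p q m : ℕ}

lemma one_sub_inv_pow_pos (hq : q ≠ 0) {n : ℕ} (hn : 2 ≤ n) : 0 < 1 - ((n : ℝ) ^ q)⁻¹ :=
  sub_pos.2 (inv_lt_one_of_one_lt₀ (one_lt_pow₀ (mod_cast hn) hq))

lemma tailProd_one_right (q : ℕ) : tailProd q 1 = 1 := by
  simp [tailProd]

lemma tailProd_succ (q : ℕ) (hm : 1 ≤ m) :
    tailProd q (m + 1) = tailProd q m * (1 - (((m + 1 : ℕ) : ℝ) ^ q)⁻¹)⁻¹ :=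
  prod_Icc_succ_top (by omega) _

lemma tailProd_nonneg (hq : q ≠ 0) : 0 ≤ tailProd q := fun _ =>
  prod_nonneg fun _ hn => (inv_pos.2 (one_sub_inv_pow_pos hq (mem_Icc.1 hn).1)).le

lemma one_le_tailProd (hq : q ≠ 0) (m : ℕ) : 1 ≤ tailProd q m := by
  refine prod_induction _ (1 ≤ ·) (fun _ _ => one_le_mul_of_one_le_of_one_le) le_rfl fun n hn => ?_
  refine (one_le_inv₀ (one_sub_inv_pow_pos hq (mem_Icc.1 hn).1)).2 (sub_le_self _ ?_)
  positivity

lemma tailProd_le_tailProd (hp : p ≠ 0) (hpq : p ≤ q) (m : ℕ) : tailProd q m ≤ tailProd p m := by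
  refine prod_le_prod (fun n hn => ?_) fun n hn => ?_
  · exact (inv_pos.2 (one_sub_inv_pow_pos (by omega) (mem_Icc.1 hn).1)).le
  · have hn2 : 2 ≤ n := (mem_Icc.1 hn).1
    have hn1 : (1 : ℝ) ≤ n := mod_cast (by omega : 1 ≤ n)
    exact inv_anti₀ (one_sub_inv_pow_pos hp hn2)
      (sub_le_sub_left (inv_pow_le_inv_pow_of_le hn1 hpq) 1)

lemma tailProd_one_left (hm : 1 ≤ m) : tailProd 1 m = m := by
  induction m, hm using Nat.le_induction with
  | base => simp [tailProd]
  | succ m hm ih =>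
    have hfactor : 1 - (((m + 1 : ℕ) : ℝ) ^ 1)⁻¹ = m / (m + 1) := by
      push_cast
      field_simp
      ring
    rw [tailProd_succ 1 hm, ih, hfactor]
    push_cast
    field_simp

lemma tailProd_two_left (hm : 1 ≤ m) : tailProd 2 m = 2 * m / (m + 1) := by
  induction m, hm using Nat.le_induction with
  | base => norm_num [tailProd]
  | succ m hm ih =>
    have hfactor : 1 - (((m + 1 : ℕ) : ℝ) ^ 2)⁻¹ = m * (m + 2) / (m + 1) ^ 2 := by
      push_cast
      field_simp
      ring
    rw [tailProd_succ 2 hm, ih, hfactor]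
    push_cast
    field_simp
    ring

lemma tailProd_le_two (hq : 2 ≤ q) (hm : 1 ≤ m) : tailProd q m ≤ 2 := by
  refine (tailProd_le_tailProd two_ne_zero hq m).trans ?_
  rw [tailProd_two_left hm, div_le_iff₀ (by positivity)]
  linarith

lemma starOp_tailProd (hq : q ≠ 0) (hm : 1 ≤ m) : starOp q (tailProd q) m = tailProd q m := by
  induction m, hm using Nat.le_induction with
  | base => exact starOp_one_right q _
  | succ m hm ih =>
    have hpos := one_sub_inv_pow_pos hq (by omega : 2 ≤ m + 1)
    have hrec : tailProd q m = tailProd q (m + 1) * (1 - (((m + 1 : ℕ) : ℝ) ^ q)⁻¹) := by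
      rw [tailProd_succ q hm, inv_mul_cancel_right₀ hpos.ne']
    rw [starOp_succ, ih, hrec]
    ring

end TailProd

section TruncZetaStar

variable {q m : ℕ}

lemma truncZetaStar_succ (q s : ℕ) : truncZetaStar q (s + 1) = starOp q (truncZetaStar q s) :=
  Function.iterate_succ_apply' _ _ _

lemma truncZetaStar_nonneg (q s : ℕ) : 0 ≤ truncZetaStar q s := by
  induction s with
  | zero => exact zero_le_one
  | succ s ih => rw [truncZetaStar_succ]; exact starOp_nonneg ih

lemma truncZetaStar_one_right (q s : ℕ) : truncZetaStar q s 1 = 1 := by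
  induction s with
  | zero => rfl
  | succ s ih => rw [truncZetaStar_succ, starOp_one_right, ih]

lemma truncZetaStar_le_tailProd (hq : q ≠ 0) (s : ℕ) (hm : 1 ≤ m) :
    truncZetaStar q s m ≤ tailProd q m := by
  induction s generalizing m with
  | zero => exact one_le_tailProd hq m
  | succ s ih =>
    rw [truncZetaStar_succ, ← starOp_tailProd hq hm]
    exact starOp_le_starOp le_rfl (truncZetaStar_nonneg q s) (fun _ => ih) m

lemma one_le_starOp_one (q : ℕ) (hm : 1 ≤ m) : 1 ≤ starOp q 1 m := by
  have hle := single_le_sum (f := fun j : ℕ => ((j : ℝ) ^ q)⁻¹ * (1 : ℕ → ℝ) j)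
    (fun j _ => mul_nonneg (by positivity) zero_le_one) (mem_Icc.2 ⟨le_rfl, hm⟩)
  simpa [starOp] using hle

lemma monotone_truncZetaStar (q : ℕ) (hm : 1 ≤ m) : Monotone fun s => truncZetaStar q s m := by
  refine monotone_nat_of_le_succ fun s => ?_
  induction s generalizing m with
  | zero => rw [truncZetaStar_succ]; exact one_le_starOp_one q hm
  | succ s ih =>
    rw [truncZetaStar_succ q s, truncZetaStar_succ q (s + 1)]
    exact starOp_le_starOp le_rfl (truncZetaStar_nonneg q s) (fun _ => ih) m

lemma tendsto_truncZetaStar (hq : q ≠ 0) (hm : 1 ≤ m) :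
    Tendsto (fun s => truncZetaStar q s m) atTop (𝓝 (tailProd q m)) := by
  induction m, hm using Nat.le_induction with
  | base => simpa only [truncZetaStar_one_right, tailProd_one_right] using tendsto_const_nhds
  | succ m hm ih =>
    obtain ⟨L, hL⟩ : ∃ L, Tendsto (fun s => truncZetaStar q s (m + 1)) atTop (𝓝 L) :=
      ⟨_, tendsto_atTop_ciSup (monotone_truncZetaStar q (by omega))
        ⟨tailProd q (m + 1), by
          rintro _ ⟨s, rfl⟩
          exact truncZetaStar_le_tailProd hq s (by omega)⟩⟩
    have hstep : Tendsto (fun s => truncZetaStar q (s + 1) (m + 1)) atTop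
        (𝓝 (tailProd q m + (((m + 1 : ℕ) : ℝ) ^ q)⁻¹ * L)) := by
      refine Tendsto.congr (fun s => ?_) ((ih.comp (tendsto_add_atTop_nat 1)).add (hL.const_mul _))
      rw [truncZetaStar_succ q s, starOp_succ, Function.comp_apply, truncZetaStar_succ q s]
    have hlim : L = tailProd q m + (((m + 1 : ℕ) : ℝ) ^ q)⁻¹ * L :=
      tendsto_nhds_unique (hL.comp (tendsto_add_atTop_nat 1)) hstep
    have hpos := one_sub_inv_pow_pos hq (by omega : 2 ≤ m + 1)
    have hLval : L = tailProd q (m + 1) := by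
      rw [tailProd_succ q hm, eq_mul_inv_iff_mul_eq₀ hpos.ne']
      linarith
    rwa [← hLval]

end TruncZetaStar

section StarTerm

variable {n q : ℕ} {k : ℕ → ℕ} {v w : ℕ → ℝ}

lemma starTerm_nonneg (hw : 0 ≤ w) : 0 ≤ starTerm n k w := fun f =>
  mul_nonneg (by positivity) (hw (f.1 (Fin.last n)))

lemma starTerm_le_starTerm (hvw : ∀ m, 1 ≤ m → v m ≤ w m) (f : DecTuple (n + 1)) :
    starTerm n k v f ≤ starTerm n k w f :=
  mul_le_mul_of_nonneg_left (hvw _ (f.2.1 _)) (by positivity)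

lemma starTerm_snoc (k : ℕ → ℕ) (w : ℕ → ℝ) (f : DecTuple (n + 1))
    (j : Icc 1 (f.1 (Fin.last n))) :
    starTerm (n + 1) k w (DecTuple.snoc f j) =
      (∏ i, ((f.1 i : ℝ) ^ k i)⁻¹) * (((j : ℝ) ^ k (n + 1))⁻¹ * w j) := by
  rw [starTerm, Fin.prod_univ_castSucc]
  simp [DecTuple.snoc, mul_assoc]

lemma hasSum_starTerm_snoc (k : ℕ → ℕ) (w : ℕ → ℝ) (f : DecTuple (n + 1)) :
    HasSum (fun j => starTerm (n + 1) k w (DecTuple.snoc f j))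
      (starTerm n k (starOp (k (n + 1)) w) f) := by
  simp only [starTerm_snoc]
  exact (Finset.hasSum _ fun j : ℕ => ((j : ℝ) ^ k (n + 1))⁻¹ * w j).mul_left _

lemma hasSum_starTerm_succ_iff (hw : 0 ≤ w) {a : ℝ} :
    HasSum (starTerm (n + 1) k w) a ↔ HasSum (starTerm n k (starOp (k (n + 1)) w)) a := by
  rw [← (DecTuple.sigmaSnocEquiv n).hasSum_iff]
  refine ⟨fun h => h.sigma (hasSum_starTerm_snoc k w), fun h =>
    HasSum.sigma_of_hasSum h (hasSum_starTerm_snoc k w) ?_⟩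
  refine (summable_sigma_of_nonneg fun _ => starTerm_nonneg hw _).2
    ⟨fun f => (hasSum_starTerm_snoc k w f).summable, ?_⟩
  exact h.summable.congr fun f => (hasSum_starTerm_snoc k w f).tsum_eq.symm

lemma summable_starTerm_succ_iff (hw : 0 ≤ w) :
    Summable (starTerm (n + 1) k w) ↔ Summable (starTerm n k (starOp (k (n + 1)) w)) :=
  exists_congr fun _ => hasSum_starTerm_succ_iff hw

lemma tsum_starTerm_add (hk : ∀ i, n < i → k i = q) (hw : 0 ≤ w) (s : ℕ) :
    ∑' f, starTerm (n + s) k w f = ∑' f, starTerm n k ((starOp q)^[s] w) f := by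
  induction s generalizing w with
  | zero => rfl
  | succ s ih =>
    rw [Function.iterate_succ_apply, ← ih (starOp_nonneg hw), ← hk (n + s + 1) (by omega)]
    exact tsum_eq_tsum_of_hasSum_iff_hasSum (hasSum_starTerm_succ_iff hw)

lemma zetaStar_eq_tsum_starTerm (n : ℕ) (k : ℕ → ℕ) :
    zetaStar (fun i : Fin (n + 1) => k i) = ∑' f, starTerm n k 1 f := by
  simp only [zetaStar, starTerm, Pi.one_apply, mul_one]

theorem tendsto_zetaStar_of_summable (hq : q ≠ 0) (hk : ∀ i, n < i → k i = q)
    (hsum : Summable (starTerm n k (tailProd q))) :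
    Tendsto (fun s => zetaStar fun i : Fin (n + 1 + s) => k i) atTop
      (𝓝 (∑' f, starTerm n k (tailProd q) f)) := by
  have hzeta (s : ℕ) : zetaStar (fun i : Fin (n + 1 + s) => k i) =
      ∑' f, starTerm n k (truncZetaStar q s) f := by
    rw [Nat.add_right_comm, zetaStar_eq_tsum_starTerm, tsum_starTerm_add hk zero_le_one]
    rfl
  simp only [hzeta]
  refine tendsto_tsum_of_dominated_convergence hsum (fun f => ?_)
    (Eventually.of_forall fun s f => ?_)
  · exact (tendsto_truncZetaStar hq (f.2.1 _)).const_mul _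
  · rw [Real.norm_of_nonneg (starTerm_nonneg (truncZetaStar_nonneg q s) f)]
    exact starTerm_le_starTerm (fun _ => truncZetaStar_le_tailProd hq s) f

end StarTerm

section Summability

variable {n p q : ℕ} {k : ℕ → ℕ} {v w : ℕ → ℝ}

lemma summable_starTerm_of_le {C : ℝ} (hv : 0 ≤ v) (hvw : ∀ m, 1 ≤ m → v m ≤ C * w m)
    (hw : Summable (starTerm n k w)) : Summable (starTerm n k v) := by
  refine .of_nonneg_of_le (starTerm_nonneg hv) (starTerm_le_starTerm hvw) ?_
  exact (hw.mul_left C).congr fun f => mul_left_comm _ _ _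

lemma summable_starTerm_zero (hw : 0 ≤ w) (hp : p ≤ k 0)
    (hsum : Summable fun m : ℕ => ((m : ℝ) ^ p)⁻¹ * w m) : Summable (starTerm 0 k w) := by
  have hinj : Function.Injective fun f : DecTuple (0 + 1) => f.1 0 := fun f g hfg =>
    Subtype.ext (funext fun i => by rwa [Fin.fin_one_eq_zero i])
  refine .of_nonneg_of_le (starTerm_nonneg hw) (fun f => ?_) (hsum.comp_injective hinj)
  have hf : (1 : ℝ) ≤ f.1 0 := mod_cast f.2.1 0
  simpa [starTerm] using
    mul_le_mul_of_nonneg_right (inv_pow_le_inv_pow_of_le hf hp) (hw (f.1 0))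

lemma summable_inv_sq_mul_sqrt : Summable fun m : ℕ => ((m : ℝ) ^ 2)⁻¹ * √(m : ℝ) := by
  refine (Real.summable_nat_rpow_inv.2 (by norm_num : (1 : ℝ) < 3 / 2)).congr fun m => ?_
  rcases m.eq_zero_or_pos with rfl | hm
  · norm_num
  · have hm0 : (0 : ℝ) < m := mod_cast hm
    rw [Real.sqrt_eq_rpow, ← Real.rpow_neg hm0.le, ← Real.rpow_natCast, ← Real.rpow_neg hm0.le,
      ← Real.rpow_add hm0]
    norm_num

lemma summable_starTerm_sqrt (hk0 : 2 ≤ k 0) (hk : ∀ i, 1 ≤ k i) :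
    Summable (starTerm n k fun m => √(m : ℝ)) := by
  have hsqrt : 0 ≤ fun m : ℕ => √(m : ℝ) := fun m => Real.sqrt_nonneg m
  induction n with
  | zero => exact summable_starTerm_zero hsqrt hk0 summable_inv_sq_mul_sqrt
  | succ n ih =>
    rw [summable_starTerm_succ_iff hsqrt]
    refine summable_starTerm_of_le (C := 2) (starOp_nonneg hsqrt) (fun m _ => ?_) ih
    exact (starOp_le_starOp (hk (n + 1)) hsqrt (fun _ _ => le_rfl) m).trans (starOp_one_sqrt_le m)

lemma summable_starTerm_natCast (hk0 : 2 ≤ k 0) (hk : ∀ i, 1 ≤ k i)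
    (hne : ¬(k 0 = 2 ∧ ∀ i, 1 ≤ i → i ≤ n → k i = 1)) :
    Summable (starTerm n k fun m => (m : ℝ)) := by
  have hcast : 0 ≤ fun m : ℕ => (m : ℝ) := fun m => m.cast_nonneg
  induction n with
  | zero =>
    have hk3 : 3 ≤ k 0 := by
      by_contra hlt
      exact hne ⟨by omega, fun i _ _ => by omega⟩
    refine summable_starTerm_zero hcast hk3
      ((Real.summable_nat_pow_inv.2 one_lt_two).congr fun m => ?_)
    rcases m.eq_zero_or_pos with rfl | hm
    · simp
    · field_simp
  | succ n ih =>
    rw [summable_starTerm_succ_iff hcast]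
    rcases (hk (n + 1)).eq_or_lt' with hlast | hlast
    · have hinit : Summable (starTerm n k fun m => (m : ℝ)) := ih fun ⟨h2, h1⟩ =>
        hne ⟨h2, fun i hi hin => by
          rcases hin.eq_or_lt with rfl | hlt
          · exact hlast
          · exact h1 i hi (by omega)⟩
      rwa [hlast, funext starOp_one_natCast]
    · exact summable_starTerm_of_le (starOp_nonneg hcast)
        (fun m _ => starOp_natCast_le_sqrt hlast m) (summable_starTerm_sqrt hk0 hk)

lemma summable_starTerm_tailProd (hq : 1 ≤ q) (hk0 : 2 ≤ k 0) (hk : ∀ i, 1 ≤ k i)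
    (hne : q = 1 → ¬(k 0 = 2 ∧ ∀ i, 1 ≤ i → i ≤ n → k i = 1)) :
    Summable (starTerm n k (tailProd q)) := by
  have hnonneg : 0 ≤ tailProd q := tailProd_nonneg (by omega)
  rcases hq.eq_or_lt' with rfl | hq2
  · exact summable_starTerm_of_le (C := 1) hnonneg
      (fun m hm => by rw [tailProd_one_left hm, one_mul])
      (summable_starTerm_natCast hk0 hk (hne rfl))
  · refine summable_starTerm_of_le (C := 2) hnonneg (fun m hm => ?_)
      (summable_starTerm_sqrt hk0 hk)
    have hsqrt : 1 ≤ √(m : ℝ) := Real.one_le_sqrt.2 (mod_cast hm)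
    linarith [tailProd_le_two hq2 hm]

end Summability

lemma padIndex_coe {r : ℕ} (k : Fin r → ℕ) (q : ℕ) (i : Fin r) : padIndex k q i = k i :=
  dif_pos i.2

lemma padIndex_of_le {r i : ℕ} (k : Fin r → ℕ) (q : ℕ) (hi : r ≤ i) : padIndex k q i = q :=
  dif_neg hi.not_gt

lemma starTerm_padIndex {n : ℕ} (k : Fin (n + 1) → ℕ) (q : ℕ) (w : ℕ → ℝ) :
    starTerm n (padIndex k q) w =
      fun f => (∏ i, ((f.1 i : ℝ) ^ k i)⁻¹) * w (f.1 (Fin.last n)) := by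
  funext f
  simp only [starTerm, padIndex_coe]

lemma summable_mul_tailProd_of_admissible (r q : ℕ) (hr : 1 ≤ r) (hq : 1 ≤ q) (k : Fin r → ℕ)
    (hadm : 2 ≤ k ⟨0, hr⟩) (hpos : ∀ i, 1 ≤ k i)
    (hne : q = 1 → k ≠ fun i : Fin r => if (i : ℕ) = 0 then 2 else 1) :
    Summable fun f : DecTuple r =>
      (∏ i, ((f.1 i : ℝ) ^ k i)⁻¹) * tailProd q (f.1 ⟨r - 1, Nat.sub_one_lt_of_lt hr⟩) := by
  obtain ⟨n, rfl⟩ := Nat.exists_eq_add_of_le' hr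
  suffices Summable (starTerm n (padIndex k q) (tailProd q)) by rwa [starTerm_padIndex] at this
  refine summable_starTerm_tailProd hq ?_ (fun i => ?_) fun hq1 ⟨h2, h1⟩ =>
    hne hq1 (funext fun i => ?_)
  · rwa [padIndex, dif_pos n.succ_pos]
  · unfold padIndex
    split_ifs
    exacts [hpos _, hq]
  · rw [← padIndex_coe k q]
    split_ifs with hi
    · rw [hi, h2]
    · exact h1 i (by omega) (by omega)

theorem stmt12_general (r q : ℕ) (hr : 1 ≤ r) (hq : 1 ≤ q) (k : Fin r → ℕ)
    (hsum : Summable fun f : DecTuple r =>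
      (∏ i, ((f.1 i : ℝ) ^ k i)⁻¹) * tailProd q (f.1 ⟨r - 1, Nat.sub_one_lt_of_lt hr⟩)) :
    Tendsto (fun s => zetaStar fun i : Fin (r + s) => padIndex k q i) atTop
      (𝓝 (∑' f : DecTuple r,
        (∏ i, ((f.1 i : ℝ) ^ k i)⁻¹) * tailProd q (f.1 ⟨r - 1, Nat.sub_one_lt_of_lt hr⟩))) := by
  obtain ⟨n, rfl⟩ := Nat.exists_eq_add_of_le' hr
  have hsum' : Summable (starTerm n (padIndex k q) (tailProd q)) := by rwa [starTerm_padIndex]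
  have hlim := tendsto_zetaStar_of_summable (by omega) (fun i => padIndex_of_le k q) hsum'
  rwa [starTerm_padIndex] at hlim

/-- ζ*(k_1,…,k_r,{q}^∞)
= Σ_{n_1 ≥ ⋯ ≥ n_r ≥ 1} (1/(n_1^{k_1}⋯n_r^{k_r})) · ∏_{n=2}^{n_r} (1 − 1/n^q)⁻¹. -/
theorem stmt12 (r q : ℕ) (hr : 1 ≤ r) (hq : 1 ≤ q) (k : Fin r → ℕ)
    (hadm : 2 ≤ k ⟨0, by omega⟩) (hpos : ∀ i, 1 ≤ k i)
    (hne : q = 1 → k ≠ fun i : Fin r => if (i : ℕ) = 0 then 2 else 1) :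
    Filter.Tendsto
      (fun s : ℕ => zetaStar (fun i : Fin (r + s) =>
        if h : (i : ℕ) < r then k ⟨i, h⟩ else q))
      Filter.atTop
      (nhds (∑' f : DecTuple r,
        (∏ i, (((f : Fin r → ℕ) i : ℝ) ^ (k i))⁻¹) *
          ∏ n ∈ Finset.Icc 2 ((f : Fin r → ℕ) ⟨r - 1, by omega⟩),
            (1 - ((n : ℝ) ^ q)⁻¹)⁻¹)) :=
  stmt12_general r q hr hq k
    (summable_mul_tailProd_of_admissible r q hr hq k hadm hpos hne)
end
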